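/- Suppose for a bounded domain Ω ⊆ ℂ³ and boundary point q there exist constants C₁, C₂ > 0 and for each small δ > 0 a point p_δ ∈ Ω with |p_δ − q| ≤ δ such that: K_Ω(p_δ, ζ₁), K_Ω(p_δ, ζ₂) ≤ C₁ δ^{−1/(4k+1)} and K_Ω(p_δ, (ζ₁+ζ₂)/√2) ≥ C₂ δ^{−1/(4k)} for fixed linearly independent unit vectors ζ₁, ζ₂. Then s_Ω(p_δ) ≤ C₃ δ^{1/(4k(4k+1))} for a constant C₃, and in particular the squeezing function s_Ω has no uniform positive lower bound near q. -/

import Mathlib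

open Metric Set

noncomputable def kobayashi {E : Type*} [NormedAddCommGroup E] [NormedSpace ℂ E]
    (Ω : Set E) (p ζ : E) : ℝ :=
  sInf {α : ℝ | 0 < α ∧ ∃ φ : ℂ → E, DifferentiableOn ℂ φ (Metric.ball 0 1) ∧
    (∀ τ ∈ Metric.ball (0 : ℂ) 1, φ τ ∈ Ω) ∧ φ 0 = p ∧ α • deriv φ 0 = ζ}

noncomputable def indicatrix {E : Type*} [NormedAddCommGroup E] [NormedSpace ℂ E]
    (Ω : Set E) (p : E) : Set E :=
  {ζ | kobayashi Ω p ζ < 1}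

noncomputable def squeezing {E : Type*} [NormedAddCommGroup E] [NormedSpace ℂ E]
    (Ω : Set E) (p : E) : ℝ :=
  sSup {r : ℝ | 0 < r ∧ ∃ f : E → E, DifferentiableOn ℂ f Ω ∧ Set.InjOn f Ω ∧
    f p = 0 ∧ f '' Ω ⊆ Metric.ball 0 1 ∧ Metric.ball 0 r ⊆ f '' Ω}

/-!
If `f` embeds `Ω` holomorphically into the unit ball with `f p = 0` and `ball 0 r ⊆ f '' Ω`, then
`f` and `f⁻¹` do not increase Kobayashi lengths, so that `L = f'(p)` satisfies
`r * K(p, ζ) ≤ ‖L ζ‖ ≤ K(p, ζ)`. Linearity of `L` gives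
`r * K(p, x ζ₁ + y ζ₂) ≤ |x| K(p, ζ₁) + |y| K(p, ζ₂)`, which makes `r` small when `ζ₁` and `ζ₂` are
short and their combination is long.

That `f⁻¹` is holomorphic is Osgood's theorem, proved by induction on the dimension. Where `f'` is
not zero, slicing by a level hypersurface of a coordinate of `f` lowers the dimension, so `f'` is
either zero or injective at every point. If `f'` vanished somewhere, then, in dimension at least
two, the zero set of the Jacobian would contain a holomorphic curve, along which `f` would be
constant.
-/

open Filter Topology Module
open scoped NNReal

section SeveralVariables

variable {E F : Type*} [NormedAddCommGroup E] [NormedSpace ℂ E]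
  [NormedAddCommGroup F] [NormedSpace ℂ F]

theorem norm_fderiv_le_of_forall_mem_ball_norm_le {f : E → F} {z : E} {r C : ℝ} (hr : 0 < r)
    (hf : DifferentiableOn ℂ f (ball z r)) (hC : ∀ w ∈ ball z r, ‖f w‖ ≤ C) :
    ‖fderiv ℂ f z‖ ≤ 2 * C / r := by
  refine Complex.norm_fderiv_le_div_of_mapsTo_ball hf (fun w hw ↦ ?_) hr
  rw [mem_closedBall, dist_eq_norm, two_mul]
  exact (norm_sub_le _ _).trans (add_le_add (hC w hw) (hC z (mem_ball_self hr)))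

theorem uniformCauchySeqOn_fderiv {ι : Type*} {l : Filter ι} {z : E} {r s : ℝ} (hsr : s < r)
    {f : ι → E → F} (hf : ∀ᶠ i in l, DifferentiableOn ℂ (f i) (ball z r))
    (hcauchy : UniformCauchySeqOn f l (ball z r)) :
    UniformCauchySeqOn (fun i ↦ fderiv ℂ (f i)) l (ball z s) := by
  intro u hu
  obtain ⟨ε, hε, hεu⟩ := Metric.mem_uniformity_dist.1 hu
  have hrs : 0 < r - s := sub_pos.2 hsr
  filter_upwards [hcauchy _ (Metric.dist_mem_uniformity (show 0 < ε * (r - s) / 4 by positivity)),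
    hf.prod_mk hf] with ⟨i, j⟩ hij ⟨hi, hj⟩ x hx
  have hsub : ball x (r - s) ⊆ ball z r := ball_subset_ball' (by linarith [mem_ball.1 hx])
  have hdiff : ∀ {i}, DifferentiableOn ℂ (f i) (ball z r) → DifferentiableAt ℂ (f i) x := fun h ↦
    h.differentiableAt (isOpen_ball.mem_nhds (hsub (mem_ball_self hrs)))
  refine hεu ?_
  rw [dist_eq_norm, ← fderiv_sub (hdiff hi) (hdiff hj)]
  calc ‖fderiv ℂ (f i - f j) x‖ ≤ 2 * (ε * (r - s) / 4) / (r - s) :=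
        norm_fderiv_le_of_forall_mem_ball_norm_le hrs ((hi.sub hj).mono hsub)
          fun w hw ↦ by simpa [dist_eq_norm] using (hij w (hsub hw)).le
    _ = ε / 2 := by field_simp; norm_num
    _ < ε := half_lt_self hε

theorem differentiableOn_of_tendstoUniformlyOn [CompleteSpace F] {ι : Type*} {l : Filter ι}
    [l.NeBot] {U : Set E} (hU : IsOpen U) {f : ι → E → F} {g : E → F}
    (hf : ∀ᶠ i in l, DifferentiableOn ℂ (f i) U) (hfg : TendstoUniformlyOn f g l U) :
    DifferentiableOn ℂ g U := by
  intro z hz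
  obtain ⟨r, hr, hrU⟩ := Metric.isOpen_iff.1 hU z hz
  have hcauchy : UniformCauchySeqOn (fun i ↦ fderiv ℂ (f i)) l (ball z (r / 2)) :=
    uniformCauchySeqOn_fderiv (half_lt_self hr) (hf.mono fun i hi ↦ hi.mono hrU)
      (hfg.uniformCauchySeqOn.mono hrU)
  choose! g' hg' using fun x hx ↦ cauchy_iff_exists_le_nhds.1 (hcauchy.cauchy_map (x := x) hx)
  have hlim := hcauchy.tendstoUniformlyOn_of_tendsto hg'
  have hnhds : ball z (r / 2) ∈ 𝓝 z := ball_mem_nhds z (half_pos hr)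
  refine (hasFDerivAt_of_tendstoUniformlyOnFilter (f := f) (g' := g')
    (hlim.tendstoUniformlyOnFilter.mono_right (le_principal_iff.2 hnhds)) ?_ ?_
    ).differentiableAt.differentiableWithinAt
  · filter_upwards [hf.prod_mk (hU.eventually_mem hz)] with ⟨i, x⟩ ⟨hi, hx⟩
    exact (hi.differentiableAt (hU.mem_nhds hx)).hasFDerivAt
  · filter_upwards [hU.eventually_mem hz] with x hx using hfg.tendsto_at hx

theorem exists_lipschitzOnWith_ball {U : Set E} (hU : IsOpen U) {f : E → F}
    (hf : DifferentiableOn ℂ f U) {z : E} (hz : z ∈ U) :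
    ∃ K, ∃ r > 0, ball z r ⊆ U ∧ LipschitzOnWith K f (ball z r) := by
  have hbdd : ∀ᶠ w in 𝓝 z, w ∈ U ∧ ‖f w‖ < ‖f z‖ + 1 :=
    (hU.eventually_mem hz).and <|
      (hf.continuousOn.continuousAt (hU.mem_nhds hz)).norm.eventually_lt_const (lt_add_one _)
  obtain ⟨R, hR, hball⟩ := Metric.eventually_nhds_iff_ball.1 hbdd
  have hsub : ∀ x ∈ ball z (R / 2), ball x (R / 2) ⊆ ball z R :=
    fun x hx ↦ ball_subset_ball' (by linarith [mem_ball.1 hx])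
  have hdiff : DifferentiableOn ℂ f (ball z R) := hf.mono fun w hw ↦ (hball w hw).1
  have hR' : ball z (R / 2) ⊆ ball z R := ball_subset_ball (by linarith)
  refine ⟨⟨2 * (‖f z‖ + 1) / (R / 2), by positivity⟩, R / 2, half_pos hR,
    fun w hw ↦ (hball w (hR' hw)).1, ?_⟩
  refine (convex_ball z (R / 2)).lipschitzOnWith_of_nnnorm_fderiv_le
    (fun w hw ↦ hdiff.differentiableAt (isOpen_ball.mem_nhds (hR' hw))) fun w hw ↦ ?_
  exact norm_fderiv_le_of_forall_mem_ball_norm_le (half_pos hR) (hdiff.mono (hsub w hw))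
    fun x hx ↦ (hball x (hsub w hw hx)).2.le

theorem exists_lipschitzOnWith_fderiv_ball {U : Set E} (hU : IsOpen U) {f : E → F}
    (hf : DifferentiableOn ℂ f U) {z : E} (hz : z ∈ U) :
    ∃ K, ∃ r > 0, ball z r ⊆ U ∧ LipschitzOnWith K (fderiv ℂ f) (ball z r) := by
  obtain ⟨K, R, hR, hball, hK⟩ := exists_lipschitzOnWith_ball hU hf hz
  refine ⟨4 * K / ⟨R, hR.le⟩, R / 2, half_pos hR, (ball_subset_ball (by linarith)).trans hball,
    LipschitzOnWith.of_dist_le_mul fun x hx y hy ↦ ?_⟩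
  have hsub : ∀ x ∈ ball z (R / 2), ball x (R / 2) ⊆ ball z R :=
    fun x hx ↦ ball_subset_ball' (by linarith [mem_ball.1 hx])
  have hat : ∀ {w}, w ∈ ball z R → DifferentiableAt ℂ f w := fun hw ↦
    hf.differentiableAt (hU.mem_nhds (hball hw))
  -- Apply the Cauchy estimate at `y` to `w ↦ f (w + (x - y)) - f w`, which is `O(‖x - y‖)`.
  have hmem : ∀ {w}, w ∈ ball y (R / 2) → w + (x - y) ∈ ball z R := fun {w} hw ↦
    hsub x hx (by simpa [dist_eq_norm, add_sub_right_comm, add_sub_assoc] using hw)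
  have hder : HasFDerivAt (fun w ↦ f (w + (x - y)) - f w) (fderiv ℂ f x - fderiv ℂ f y) y := by
    refine HasFDerivAt.sub ?_ (hat (hsub y hy (mem_ball_self (half_pos hR)))).hasFDerivAt
    refine (hasFDerivAt_comp_add_right (x - y)).2 ?_
    rw [add_sub_cancel]
    exact (hat (hsub x hx (mem_ball_self (half_pos hR)))).hasFDerivAt
  rw [dist_eq_norm, ← hder.fderiv]
  calc ‖fderiv ℂ (fun w ↦ f (w + (x - y)) - f w) y‖ ≤ 2 * (K * dist x y) / (R / 2) := by
        refine norm_fderiv_le_of_forall_mem_ball_norm_le (half_pos hR) (fun w hw ↦ ?_) fun w hw ↦ ?_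
        · have h₁ := hat (hmem hw)
          have h₂ := hat (hsub y hy hw)
          exact ((h₁.comp w (by fun_prop)).sub h₂).differentiableWithinAt
        · rw [← dist_eq_norm]
          simpa [dist_eq_norm] using hK.dist_le_mul _ (hmem hw) _ (hsub y hy hw)
    _ = 4 * K / R * dist x y := by ring

theorem contDiffOn_one_of_differentiableOn {U : Set E} (hU : IsOpen U) {f : E → F}
    (hf : DifferentiableOn ℂ f U) : ContDiffOn ℂ 1 f U := by
  refine (contDiffOn_succ_iff_fderiv_of_isOpen (n := 0) hU).2 ⟨hf, by simp, contDiffOn_zero.2 ?_⟩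
  intro z hz
  obtain ⟨K, r, hr, -, hK⟩ := exists_lipschitzOnWith_fderiv_ball hU hf hz
  exact (hK.continuousOn.continuousAt (ball_mem_nhds z hr)).continuousWithinAt

theorem norm_sub_sub_fderiv_le_of_lipschitzOnWith {f : E → F} {s : Set E} {K : ℝ≥0}
    (hs : Convex ℝ s) (hf : ∀ x ∈ s, DifferentiableAt ℂ f x) (hK : LipschitzOnWith K (fderiv ℂ f) s)
    {x y : E} (hx : x ∈ s) (hy : y ∈ s) :
    ‖f y - f x - fderiv ℂ f x (y - x)‖ ≤ K * ‖y - x‖ ^ 2 := by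
  have hseg : segment ℝ x y ⊆ s := hs.segment_subset hx hy
  rw [pow_two, ← mul_assoc]
  refine (convex_segment x y).norm_image_sub_le_of_norm_fderiv_le' (fun w hw ↦ hf w (hseg hw))
    (fun w hw ↦ ?_) (left_mem_segment ℝ x y) (right_mem_segment ℝ x y)
  refine (hK.norm_sub_le (hseg hw) hx).trans ?_
  gcongr
  exact norm_sub_le_of_mem_segment hw

theorem tendstoUniformlyOn_difference_quotient {f : E → F} {s s' : Set E} {K : ℝ≥0} {v : E}
    (hs : Convex ℝ s) (hf : ∀ x ∈ s, DifferentiableAt ℂ f x)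
    (hK : LipschitzOnWith K (fderiv ℂ f) s) (hs's : s' ⊆ s)
    (hadd : ∀ᶠ t : ℂ in 𝓝[≠] 0, ∀ w ∈ s', w + t • v ∈ s) :
    TendstoUniformlyOn (fun (t : ℂ) w ↦ t⁻¹ • (f (w + t • v) - f w))
      (fun w ↦ fderiv ℂ f w v) (𝓝[≠] 0) s' := by
  refine Metric.tendstoUniformlyOn_iff.2 fun ε hε ↦ ?_
  have hsmall : ∀ᶠ t : ℂ in 𝓝 0, K * ‖v‖ ^ 2 * ‖t‖ < ε :=
    (show Continuous fun t : ℂ ↦ K * ‖v‖ ^ 2 * ‖t‖ by fun_prop).tendsto' 0 0 (by simp)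
      |>.eventually_lt_const hε
  filter_upwards [hadd, hsmall.filter_mono nhdsWithin_le_nhds, self_mem_nhdsWithin]
    with t ht htε ht₀ w hw
  refine lt_of_le_of_lt ?_ htε
  have htaylor := norm_sub_sub_fderiv_le_of_lipschitzOnWith hs hf hK (hs's hw) (ht w hw)
  rw [add_sub_cancel_left, map_smul] at htaylor
  calc dist (fderiv ℂ f w v) (t⁻¹ • (f (w + t • v) - f w))
      = ‖t‖⁻¹ * ‖f (w + t • v) - f w - t • fderiv ℂ f w v‖ := by
        rw [dist_comm, dist_eq_norm, ← norm_inv, ← norm_smul, smul_sub t⁻¹ (_ - _),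
          inv_smul_smul₀ ht₀]
    _ ≤ ‖t‖⁻¹ * (K * ‖t • v‖ ^ 2) := by gcongr
    _ = K * ‖v‖ ^ 2 * ‖t‖ := by
        have : ‖t‖ ≠ 0 := norm_ne_zero_iff.2 ht₀
        rw [norm_smul]
        field_simp

theorem differentiableOn_fderiv_apply [CompleteSpace F] {U : Set E} (hU : IsOpen U) {f : E → F}
    (hf : DifferentiableOn ℂ f U) (v : E) : DifferentiableOn ℂ (fun z ↦ fderiv ℂ f z v) U := by
  intro z hz
  obtain ⟨K, r, hr, hball, hK⟩ := exists_lipschitzOnWith_fderiv_ball hU hf hz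
  have hat : ∀ w ∈ ball z r, DifferentiableAt ℂ f w := fun w hw ↦
    hf.differentiableAt (hU.mem_nhds (hball hw))
  have hball₂ : ball z (r / 2) ⊆ ball z r := ball_subset_ball (by linarith)
  have hadd : ∀ᶠ t : ℂ in 𝓝[≠] 0, ∀ w ∈ ball z (r / 2), w + t • v ∈ ball z r := by
    have hsmall : ∀ᶠ t : ℂ in 𝓝 0, ‖t • v‖ < r / 2 :=
      (show Continuous fun t : ℂ ↦ ‖t • v‖ by fun_prop).tendsto' 0 0 (by simp)
        |>.eventually_lt_const (half_pos hr)
    filter_upwards [hsmall.filter_mono nhdsWithin_le_nhds] with t ht w hw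
    rw [mem_ball_iff_norm, add_sub_right_comm]
    linarith [norm_add_le (w - z) (t • v), mem_ball_iff_norm.1 hw]
  have hdiff : ∀ᶠ t : ℂ in 𝓝[≠] 0,
      DifferentiableOn ℂ (fun w ↦ t⁻¹ • (f (w + t • v) - f w)) (ball z (r / 2)) := by
    filter_upwards [hadd] with t ht w hw
    have htrans := (hat _ (ht w hw)).comp w (f := fun w ↦ w + t • v) (by fun_prop)
    exact ((htrans.sub (hat w (hball₂ hw))).const_smul t⁻¹).differentiableWithinAt
  exact ((differentiableOn_of_tendstoUniformlyOn isOpen_ball hdiff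
    (tendstoUniformlyOn_difference_quotient (convex_ball z r) hat hK hball₂ hadd)).differentiableAt
    (ball_mem_nhds z (half_pos hr))).differentiableWithinAt

end SeveralVariables

theorem exists_mem_ball_eq_zero_of_norm_center_lt {f : ℂ → ℂ} {c : ℂ} {ρ m : ℝ}
    (hρ : 0 < ρ) (hf : DiffContOnCl ℂ f (ball c ρ)) (hc : ‖f c‖ < m)
    (hm : ∀ t ∈ sphere c ρ, m ≤ ‖f t‖) : ∃ t ∈ ball c ρ, f t = 0 := by
  by_contra! hball
  have hm₀ : 0 < m := (norm_nonneg _).trans_lt hc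
  have hne : ∀ t ∈ closure (ball c ρ), f t ≠ 0 := by
    rw [closure_ball c hρ.ne', ← ball_union_sphere]
    rintro t (ht | ht)
    · exact hball t ht
    · exact norm_pos_iff.1 (hm₀.trans_le (hm t ht))
  have hinv : ‖(f c)⁻¹‖ ≤ m⁻¹ := by
    refine Complex.norm_le_of_forall_mem_frontier_norm_le isBounded_ball (hf.inv hne)
      (fun t ht ↦ ?_) (subset_closure (mem_ball_self hρ))
    rw [frontier_ball c hρ.ne'] at ht
    simpa using inv_anti₀ hm₀ (hm t ht)
  rw [norm_inv, inv_le_inv₀ (norm_pos_iff.2 (hball c (mem_ball_self hρ))) hm₀] at hinv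
  exact hinv.not_gt hc

theorem eventually_exists_mem_ball_eq_zero {X : Type*} [TopologicalSpace X] {g : X → ℂ → ℂ}
    {x₀ : X} {c : ℂ} {ρ : ℝ} (hρ : 0 < ρ)
    (hcenter : ContinuousAt (fun x ↦ g x c) x₀)
    (hsphere : ∀ t ∈ sphere c ρ, ContinuousAt (Function.uncurry g) (x₀, t))
    (hdiff : ∀ᶠ x in 𝓝 x₀, DiffContOnCl ℂ (g x) (ball c ρ)) (hc : g x₀ c = 0)
    (hne : ∀ t ∈ sphere c ρ, g x₀ t ≠ 0) : ∀ᶠ x in 𝓝 x₀, ∃ t ∈ ball c ρ, g x t = 0 := by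
  have hcont_right : ∀ t ∈ sphere c ρ, ContinuousAt (g x₀) t := fun t ht ↦
    (hsphere t ht).comp (f := fun t ↦ (x₀, t)) (by fun_prop)
  obtain ⟨t₀, ht₀, hmin⟩ := (isCompact_sphere c ρ).exists_isMinOn
    (NormedSpace.sphere_nonempty.2 hρ.le) fun t ht ↦ (hcont_right t ht).norm.continuousWithinAt
  have hm : 0 < ‖g x₀ t₀‖ := norm_pos_iff.2 (hne t₀ ht₀)
  have hlower : ∀ᶠ x in 𝓝 x₀, ∀ t ∈ sphere c ρ, ‖g x₀ t₀‖ / 2 < ‖g x t‖ :=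
    (isCompact_sphere c ρ).eventually_forall_of_forall_eventually fun t ht ↦
      (hsphere t ht).norm.eventually_const_lt ((half_lt_self hm).trans_le (hmin ht))
  have hupper : ∀ᶠ x in 𝓝 x₀, ‖g x c‖ < ‖g x₀ t₀‖ / 2 :=
    hcenter.norm.eventually_lt_const (by simpa [hc] using half_pos hm)
  filter_upwards [hdiff, hlower, hupper] with x hx hlx hux
  exact exists_mem_ball_eq_zero_of_norm_center_lt hρ hx hux fun t ht ↦ (hlx t ht).le

theorem not_eventually_hasDerivAt_zero_of_injOn {F : Type*} [NormedAddCommGroup F]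
    [NormedSpace ℂ F] {c : ℂ → F} {s : Set ℂ} {a : ℂ} (hs : s ∈ 𝓝 a) (hc : InjOn c s) :
    ¬ ∀ᶠ z in 𝓝 a, HasDerivAt c 0 z := by
  intro hzero
  obtain ⟨r, hr, hball⟩ := Metric.eventually_nhds_iff_ball.1 (hzero.and hs)
  obtain ⟨b, hb, hba⟩ := (infinite_of_mem_nhds a (ball_mem_nhds a hr)).nontrivial.exists_ne a
  refine hba (hc (hball b hb).2 (mem_of_mem_nhds hs) ?_)
  exact isOpen_ball.is_const_of_deriv_eq_zero (convex_ball a r).isPreconnected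
    (fun z hz ↦ (hball z hz).1.differentiableAt.differentiableWithinAt)
    (fun z hz ↦ (hball z hz).1.deriv) hb (mem_ball_self hr)

theorem continuousAt_uncurry_dslope_add {𝕜 F : Type*} [NontriviallyNormedField 𝕜]
    [NormedAddCommGroup F] [NormedSpace 𝕜 F] {f : 𝕜 → F} {a t : 𝕜} (ht : t ≠ 0)
    (ha : ContinuousAt f a) (hat : ContinuousAt f (a + t)) :
    ContinuousAt (Function.uncurry fun x t ↦ dslope f x (x + t)) (a, t) := by
  have hquot : (fun p : 𝕜 × 𝕜 ↦ p.2⁻¹ • (f (p.1 + p.2) - f p.1)) =ᶠ[𝓝 (a, t)]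
      Function.uncurry fun x t ↦ dslope f x (x + t) := by
    filter_upwards [continuousAt_snd.eventually_ne ht] with ⟨x, t⟩ ht
    simp [dslope_of_ne f (add_ne_left.2 ht : x + t ≠ x), slope_def_module]
  refine ContinuousAt.congr ?_ hquot
  exact (continuousAt_snd.inv₀ ht).smul
    ((hat.comp (f := fun p : 𝕜 × 𝕜 ↦ p.1 + p.2) (by fun_prop)).sub
      (ha.comp (f := fun p : 𝕜 × 𝕜 ↦ p.1) (by fun_prop)))

/-- If `f' a = 0`, then by Hurwitz's theorem the difference quotients
`t ↦ (f (x + t) - f x) / t` with `x` near `a` vanish somewhere, by injectivity only at `t = 0`. -/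
theorem deriv_ne_zero_of_injOn {U : Set ℂ} (hU : IsOpen U) {f : ℂ → ℂ}
    (hf : DifferentiableOn ℂ f U) (hinj : InjOn f U) {a : ℂ} (ha : a ∈ U) : deriv f a ≠ 0 := by
  intro hzero
  have hcont : ∀ {x}, x ∈ U → ContinuousAt f x := fun hx ↦
    hf.continuousOn.continuousAt (hU.mem_nhds hx)
  obtain ⟨r, hr, hball⟩ := Metric.isOpen_iff.1 hU a ha
  obtain ⟨ρ, hρ, rfl⟩ : ∃ ρ > 0, r = 2 * ρ := ⟨r / 2, half_pos hr, by ring⟩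
  have hmem : ∀ x ∈ ball a ρ, ∀ t ∈ closedBall (0 : ℂ) ρ, x + t ∈ U := fun x hx t ht ↦ by
    refine hball (mem_ball_iff_norm.2 ?_)
    rw [add_sub_right_comm]
    linarith [norm_add_le (x - a) t, mem_ball_iff_norm.1 hx, mem_closedBall_zero_iff.1 ht]
  have hx₀ : ∀ x ∈ ball a ρ, x ∈ U := fun x hx ↦ by
    simpa using hmem x hx 0 (mem_closedBall_self hρ.le)
  have hquot : ∀ x ∈ ball a ρ, ∀ t ∈ closedBall (0 : ℂ) ρ, t ≠ 0 → dslope f x (x + t) ≠ 0 :=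
    fun x hx t ht ht₀ hxt ↦ by
      have hsub := sub_smul_dslope f x (x + t)
      rw [hxt, smul_zero, eq_comm, sub_eq_zero] at hsub
      exact ht₀ (add_eq_left.1 (hinj (hmem x hx t ht) (hx₀ x hx) hsub))
  have hvanish : ∀ᶠ x in 𝓝 a, ∃ t ∈ ball (0 : ℂ) ρ, dslope f x (x + t) = 0 := by
    refine eventually_exists_mem_ball_eq_zero hρ ?_ (fun t ht ↦ ?_) ?_ (by simpa) fun t ht ↦
      hquot a (mem_ball_self hρ) t (sphere_subset_closedBall ht) (ne_of_mem_sphere ht hρ.ne')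
    · simpa using ((hf.deriv hU).continuousOn.continuousAt (hU.mem_nhds ha))
    · exact continuousAt_uncurry_dslope_add (ne_of_mem_sphere ht hρ.ne') (hcont ha)
        (hcont (hmem a (mem_ball_self hρ) t (sphere_subset_closedBall ht)))
    · filter_upwards [ball_mem_nhds a hρ] with x hx
      refine DifferentiableOn.diffContOnCl_ball (U := (x + ·) ⁻¹' U) ?_ fun t ht ↦ hmem x hx t ht
      exact ((Complex.differentiableOn_dslope (hU.mem_nhds (hx₀ x hx))).2 hf).comp
        (by fun_prop) (mapsTo_preimage _ _)
  refine not_eventually_hasDerivAt_zero_of_injOn (hU.mem_nhds ha) hinj ?_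
  filter_upwards [hvanish, ball_mem_nhds a hρ, hU.mem_nhds ha] with x ⟨t, ht, hxt⟩ hx hxU
  obtain rfl : t = 0 := not_imp_comm.1 (hquot x hx t (ball_subset_closedBall ht)) (not_not.2 hxt)
  rw [add_zero, dslope_same] at hxt
  exact hxt ▸ (hf.differentiableAt (hU.mem_nhds hxU)).hasDerivAt

section Lines

variable {E F : Type*} [NormedAddCommGroup E] [NormedSpace ℂ E]
  [NormedAddCommGroup F] [NormedSpace ℂ F] {U : Set E}

theorem eventually_add_smul_mem (hU : IsOpen U) {z : E} (hz : z ∈ U) (v : E) :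
    ∀ᶠ t : ℂ in 𝓝 0, z + t • v ∈ U :=
  (show Continuous fun t : ℂ ↦ z + t • v by fun_prop).tendsto' 0 z (by simp)
    |>.eventually_mem (hU.mem_nhds hz)

theorem hasDerivAt_comp_add_smul (hU : IsOpen U) {f : E → F} (hf : DifferentiableOn ℂ f U)
    {z v : E} {t : ℂ} (ht : z + t • v ∈ U) :
    HasDerivAt (fun t : ℂ ↦ f (z + t • v)) (fderiv ℂ f (z + t • v) v) t := by
  have hline : HasDerivAt (fun t : ℂ ↦ z + t • v) v t := by
    simpa using ((hasDerivAt_id t).smul_const v).const_add z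
  exact (hf.differentiableAt (hU.mem_nhds ht)).hasFDerivAt.comp_hasDerivAt t hline

theorem differentiableOn_comp_add_smul (hU : IsOpen U) {f : E → F} (hf : DifferentiableOn ℂ f U)
    (z v : E) : DifferentiableOn ℂ (fun t : ℂ ↦ f (z + t • v)) ((fun t : ℂ ↦ z + t • v) ⁻¹' U) :=
  fun _ ht ↦ (hasDerivAt_comp_add_smul hU hf ht).differentiableAt.differentiableWithinAt

theorem analyticAt_comp_add_smul [CompleteSpace F] (hU : IsOpen U) {f : E → F}
    (hf : DifferentiableOn ℂ f U) {z v : E} {t : ℂ} (ht : z + t • v ∈ U) :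
    AnalyticAt ℂ (fun t : ℂ ↦ f (z + t • v)) t :=
  (differentiableOn_comp_add_smul hU hf z v).analyticAt
    ((hU.preimage (by fun_prop)).mem_nhds ht)

theorem eventually_exists_zero_on_parallel_line (hU : IsOpen U) {J : E → ℂ}
    (hJ : DifferentiableOn ℂ J U) {z v : E} (hz : z ∈ U) (hJz : J z = 0)
    (hv : ¬ ∀ᶠ t : ℂ in 𝓝 0, J (z + t • v) = 0) {ε : ℝ} (hε : 0 < ε) :
    ∀ᶠ w in 𝓝 z, ∃ t ∈ ball (0 : ℂ) ε, J (w + t • v) = 0 := by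
  have hz₀ : z + (0 : ℂ) • v ∈ U := by simpa using hz
  have hiso : ∀ᶠ t : ℂ in 𝓝 0, t ∈ ({0}ᶜ : Set ℂ) → J (z + t • v) ≠ 0 :=
    eventually_nhdsWithin_iff.1 ((analyticAt_comp_add_smul hU hJ
      hz₀).eventually_eq_zero_or_eventually_ne_zero.resolve_left hv)
  obtain ⟨r, hr, hball⟩ := Metric.eventually_nhds_iff_ball.1
    ((eventually_add_smul_mem hU hz v).and hiso)
  obtain ⟨ρ, hρ, hρε, hρr⟩ : ∃ ρ > 0, ρ ≤ ε ∧ ρ < r :=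
    ⟨min ε (r / 2), by positivity, min_le_left _ _, (min_le_right _ _).trans_lt (half_lt_self hr)⟩
  have hmem : ∀ t ∈ closedBall (0 : ℂ) ρ, z + t • v ∈ U := fun t ht ↦
    (hball t (closedBall_subset_ball hρr ht)).1
  have hcont : Continuous fun x : E × ℂ ↦ x.1 + x.2 • v := by fun_prop
  have hnear : ∀ᶠ w in 𝓝 z, ∀ t ∈ closedBall (0 : ℂ) ρ, w + t • v ∈ U :=
    (isCompact_closedBall 0 ρ).eventually_forall_of_forall_eventually fun t ht ↦
      hcont.continuousAt.eventually_mem (hU.mem_nhds (hmem t ht))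
  have hzero : ∀ᶠ w in 𝓝 z, ∃ t ∈ ball (0 : ℂ) ρ, J (w + t • v) = 0 := by
    refine eventually_exists_mem_ball_eq_zero hρ ?_ (fun t ht ↦ ?_) ?_ (by simpa using hJz) ?_
    · simpa using (hJ.differentiableAt (hU.mem_nhds hz)).continuousAt
    · exact ContinuousAt.comp (f := fun x : E × ℂ ↦ x.1 + x.2 • v)
        (hJ.differentiableAt (hU.mem_nhds (hmem t (sphere_subset_closedBall ht)))).continuousAt
        hcont.continuousAt
    · filter_upwards [hnear] with w hw
      exact ((differentiableOn_comp_add_smul hU hJ w v).mono hw).diffContOnCl_ball subset_rfl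
    · exact fun t ht ↦ (hball t (sphere_subset_ball hρr ht)).2 (ne_of_mem_sphere ht hρ.ne')
  exact hzero.mono fun w ⟨t, ht, hwt⟩ ↦ ⟨t, ball_subset_ball hρε ht, hwt⟩

/-- Otherwise every iterated derivative of `J` along `v` vanishes on the zero set of `J`. -/
theorem exists_fderiv_apply_ne_zero_of_vanishing (hU : IsOpen U) {J : E → ℂ}
    (hJ : DifferentiableOn ℂ J U) {a v : E} (ha : a ∈ U) (hJa : J a = 0)
    (hv : ¬ ∀ᶠ t : ℂ in 𝓝 0, J (a + t • v) = 0) :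
    ∃ H : E → ℂ, DifferentiableOn ℂ H U ∧ (∀ x ∈ U, J x = 0 → H x = 0) ∧
      ∃ z ∈ U, J z = 0 ∧ fderiv ℂ H z v ≠ 0 := by
  contrapose! hv
  have ha₀ : a + (0 : ℂ) • v ∈ U := by simpa using ha
  have hderiv : ∀ (n : ℕ) (H : E → ℂ), DifferentiableOn ℂ H U → (∀ x ∈ U, J x = 0 → H x = 0) →
      iteratedDeriv n (fun t : ℂ ↦ H (a + t • v)) 0 = 0 := by
    intro n
    induction n with
    | zero => intro H _ hJH; simpa using hJH a ha hJa
    | succ n ih =>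
      intro H hH hJH
      have hline : deriv (fun t : ℂ ↦ H (a + t • v)) =ᶠ[𝓝 0]
          fun t ↦ fderiv ℂ H (a + t • v) v := by
        filter_upwards [eventually_add_smul_mem hU ha v] with t ht
        exact (hasDerivAt_comp_add_smul hU hH ht).deriv
      rw [iteratedDeriv_succ', hline.iteratedDeriv_eq]
      exact ih _ (differentiableOn_fderiv_apply hU hH v) (hv H hH hJH)
  refine analyticOrderAt_eq_top.1 (ENat.eq_top_iff_forall_ge.2 fun n ↦ ?_)
  exact (natCast_le_analyticOrderAt_iff_iteratedDeriv_eq_zero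
    (analyticAt_comp_add_smul hU hJ ha₀)).2 fun i _ ↦ hderiv i J hJ fun _ _ ↦ id

end Lines

section ZeroCurves

variable {E : Type*} [NormedAddCommGroup E] [NormedSpace ℂ E] {U : Set E}

theorem exists_implicit_curve (hU : IsOpen U) {H : E → ℂ} (hH : DifferentiableOn ℂ H U)
    {z u v : E} (hz : z ∈ U) (hHz : H z = 0) (hv : fderiv ℂ H z v ≠ 0) :
    ∃ γ : ℂ → ℂ, (∀ᶠ s in 𝓝 0, DifferentiableAt ℂ γ s) ∧
      ∀ᶠ x : ℂ × ℂ in 𝓝 (0, 0), H (z + x.1 • u + x.2 • v) = 0 → γ x.1 = x.2 := by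
  set plane : ℂ × ℂ → E := fun x ↦ z + x.1 • u + x.2 • v with hplane
  have hplane₀ : plane (0, 0) = z := by simp [hplane]
  have hG : ContDiffAt ℂ 1 (H ∘ plane) (0, 0) := by
    refine ContDiffAt.comp (0, 0) ?_ (by fun_prop)
    rw [hplane₀]
    exact (contDiffOn_one_of_differentiableOn hU hH).contDiffAt (hU.mem_nhds hz)
  have hpartial : ∀ t, fderiv ℂ (H ∘ plane) (0, 0) (0, t) = t * fderiv ℂ H z v := by
    intro t
    have hplane' : HasFDerivAt plane ((ContinuousLinearMap.fst ℂ ℂ ℂ).smulRight u +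
        (ContinuousLinearMap.snd ℂ ℂ ℂ).smulRight v) (0, 0) :=
      ((hasFDerivAt_fst.smul_const u).const_add z).add (hasFDerivAt_snd.smul_const v)
    have hH' : HasFDerivAt H (fderiv ℂ H z) (plane (0, 0)) :=
      hplane₀ ▸ (hH.differentiableAt (hU.mem_nhds hz)).hasFDerivAt
    simp [(hH'.comp (0, 0) hplane').fderiv]
  have hinv : (fderiv ℂ (H ∘ plane) (0, 0) ∘L .inr ℂ ℂ ℂ).IsInvertible :=
    ⟨ContinuousLinearEquiv.unitsEquivAut ℂ (Units.mk0 _ hv), by ext; simp [hpartial]⟩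
  refine ⟨hG.implicitFunction one_ne_zero hinv, ?_, ?_⟩
  · exact ((hG.contDiffAt_implicitFunction one_ne_zero hinv).eventually (by simp)).mono
      fun s hs ↦ hs.differentiableAt one_ne_zero
  · filter_upwards [hG.eventually_apply_eq_iff_implicitFunction one_ne_zero hinv] with x hx hHx
    exact hx.1 (by simpa [hplane₀, hHz] using hHx)

theorem injective_graph_of_linearIndependent {u v : E} (huv : LinearIndependent ℂ ![u, v]) (z : E)
    (γ : ℂ → ℂ) : Function.Injective fun s ↦ z + s • u + γ s • v := by
  intro s t hst
  have : (s - t) • u + (γ s - γ t) • v = 0 := by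
    rw [← sub_eq_zero] at hst
    rw [← hst]; simp only; module
  exact sub_eq_zero.1 (LinearIndependent.pair_iff.1 huv _ _ this).1

/-- Unless `J` vanishes along a line, the curve solves `H = 0` for a suitable `H` vanishing on the
zeros of `J`: by Hurwitz's theorem each nearby parallel line carries a zero of `J`, and hence of
`H`. -/
theorem exists_injective_curve_in_zero_set (hU : IsOpen U) {J : E → ℂ}
    (hJ : DifferentiableOn ℂ J U) {a u v : E} (huv : LinearIndependent ℂ ![u, v]) (ha : a ∈ U)
    (hJa : J a = 0) : ∃ c : ℂ → E, Function.Injective c ∧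
      ∀ᶠ s in 𝓝 0, DifferentiableAt ℂ c s ∧ c s ∈ U ∧ J (c s) = 0 := by
  by_cases hline : ∀ᶠ t : ℂ in 𝓝 0, J (a + t • v) = 0
  · refine ⟨fun t ↦ a + t • v, fun s t hst ↦ smul_left_injective ℂ (huv.ne_zero 1)
      (add_left_cancel hst), ?_⟩
    filter_upwards [hline, eventually_add_smul_mem hU ha v] with t ht htU
    exact ⟨by fun_prop, htU, ht⟩
  obtain ⟨H, hH, hJH, z, hz, hJz, hHz⟩ :=
    exists_fderiv_apply_ne_zero_of_vanishing hU hJ ha hJa hline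
  have hz₀ : z + (0 : ℂ) • v = z := by simp
  have hisolated : ¬ ∀ᶠ t : ℂ in 𝓝 0, J (z + t • v) = 0 := by
    intro hzero
    have hconst : (fun t : ℂ ↦ H (z + t • v)) =ᶠ[𝓝 0] fun _ ↦ 0 := by
      filter_upwards [hzero, eventually_add_smul_mem hU hz v] with t ht htU using hJH _ htU ht
    have hderiv := hasDerivAt_comp_add_smul hU hH (hz₀.symm ▸ hz)
    rw [hz₀] at hderiv
    exact hHz (by rw [← hderiv.deriv, hconst.deriv_eq, deriv_const])
  obtain ⟨γ, hγ, hγH⟩ := exists_implicit_curve (u := u) hU hH hz (hJH z hz hJz) hHz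
  refine ⟨fun s ↦ z + s • u + γ s • v, injective_graph_of_linearIndependent huv z γ, ?_⟩
  have hplane : ∀ᶠ x : ℂ × ℂ in 𝓝 (0, 0), z + x.1 • u + x.2 • v ∈ U :=
    (show Continuous fun x : ℂ × ℂ ↦ z + x.1 • u + x.2 • v by fun_prop).tendsto' _ z (by simp)
      |>.eventually_mem (hU.mem_nhds hz)
  obtain ⟨ε, hε, hball⟩ := Metric.eventually_nhds_iff_ball.1 (hplane.and hγH)
  have hparallel : ∀ᶠ s : ℂ in 𝓝 0, ∃ t ∈ ball (0 : ℂ) ε, J (z + s • u + t • v) = 0 :=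
    ((show Continuous fun s : ℂ ↦ z + s • u by fun_prop).tendsto' 0 z (by simp)).eventually
      (eventually_exists_zero_on_parallel_line hU hJ hz hJz hisolated hε)
  filter_upwards [hγ, hparallel, ball_mem_nhds 0 hε] with s hs ⟨t, ht, hJt⟩ hsε
  obtain ⟨hst, hγt⟩ := hball (s, t) (ball_prod_same (0 : ℂ) (0 : ℂ) ε ▸ ⟨hsε, ht⟩)
  obtain rfl : γ s = t := hγt (hJH _ hst hJt)
  exact ⟨by fun_prop, hst, hJt⟩

end ZeroCurves

section Osgood

variable {E F : Type*} [NormedAddCommGroup E] [NormedSpace ℂ E]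
  [NormedAddCommGroup F] [NormedSpace ℂ F] {U : Set E}

theorem det_comp_basis_ne_zero_iff_injective {𝕜 V W ι : Type*} [Field 𝕜] [AddCommGroup V]
    [Module 𝕜 V] [AddCommGroup W] [Module 𝕜 W] [Fintype ι] [DecidableEq ι] (b : Basis ι 𝕜 V)
    (b' : Basis ι 𝕜 W) (L : V →ₗ[𝕜] W) : b'.det (L ∘ b) ≠ 0 ↔ Function.Injective L := by
  have : FiniteDimensional 𝕜 V := b.finiteDimensional_of_finite
  have : FiniteDimensional 𝕜 W := b'.finiteDimensional_of_finite
  rw [← isUnit_iff_ne_zero, ← b'.is_basis_iff_det]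
  refine ⟨fun h ↦ ?_, fun h ↦ ?_⟩
  · exact LinearMap.injective_of_linearIndependent b.span_eq h.1
  · have hli := b.linearIndependent.map' L (LinearMap.ker_eq_bot.2 h)
    exact ⟨hli, hli.span_eq_top_of_card_eq_finrank' (Module.finrank_eq_card_basis b').symm⟩

theorem exists_jacobian [FiniteDimensional ℂ E] [FiniteDimensional ℂ F]
    (hEF : finrank ℂ E = finrank ℂ F) (hU : IsOpen U) {f : E → F} (hf : DifferentiableOn ℂ f U) :
    ∃ J : E → ℂ, DifferentiableOn ℂ J U ∧
      ∀ z, J z ≠ 0 ↔ Function.Injective (fderiv ℂ f z) := by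
  let b := finBasis ℂ E
  let b' : Basis (Fin (finrank ℂ E)) ℂ F := (finBasis ℂ F).reindex (finCongr hEF.symm)
  refine ⟨fun z ↦ b'.det fun i ↦ fderiv ℂ f z (b i), ?_,
    fun z ↦ det_comp_basis_ne_zero_iff_injective b b' (fderiv ℂ f z)⟩
  have hentry (i j) : DifferentiableOn ℂ (fun z ↦ b'.repr (fderiv ℂ f z (b j)) i) U :=
    (b'.coord i).toContinuousLinearMap.differentiable.comp_differentiableOn
      (differentiableOn_fderiv_apply hU hf (b j))
  simp only [Basis.det_apply, Matrix.det_apply, Basis.toMatrix_apply]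
  exact DifferentiableOn.fun_sum fun σ _ ↦ DifferentiableOn.const_smul (fun z hz ↦
    (HasFDerivWithinAt.finsetProd fun i _ ↦
      (hentry (σ i) i z hz).hasFDerivWithinAt).differentiableWithinAt) _

theorem injective_fderiv_of_forall_eq_zero_or_injective [FiniteDimensional ℂ E]
    [FiniteDimensional ℂ F] (hEF : finrank ℂ E = finrank ℂ F) (hE : 1 < finrank ℂ E)
    (hU : IsOpen U) {f : E → F} (hf : DifferentiableOn ℂ f U) (hinj : InjOn f U)
    (hf' : ∀ z ∈ U, fderiv ℂ f z = 0 ∨ Function.Injective (fderiv ℂ f z)) {a : E} (ha : a ∈ U) :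
    Function.Injective (fderiv ℂ f a) := by
  obtain ⟨J, hJ, hJf⟩ := exists_jacobian hEF hU hf
  refine (hJf a).1 fun hJa ↦ ?_
  have : Nontrivial E := nontrivial_of_finrank_pos (R := ℂ) (zero_lt_one.trans hE)
  obtain ⟨u, hu⟩ := exists_ne (0 : E)
  obtain ⟨v, huv⟩ := exists_linearIndependent_pair_of_one_lt_finrank hE hu
  obtain ⟨c, hcinj, hc⟩ := exists_injective_curve_in_zero_set hU hJ huv ha hJa
  have hcU : c ⁻¹' U ∈ 𝓝 0 := hc.mono fun s hs ↦ hs.2.1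
  refine not_eventually_hasDerivAt_zero_of_injOn (c := f ∘ c) hcU
    (hinj.comp hcinj.injOn (mapsTo_preimage c U)) ?_
  filter_upwards [hc] with s ⟨hcs, hsU, hJs⟩
  have hfs := (hf.differentiableAt (hU.mem_nhds hsU)).hasFDerivAt
  rw [(hf' _ hsU).resolve_right fun h ↦ (hJf _).2 h hJs] at hfs
  simpa using hfs.comp_hasDerivAt s hcs.hasDerivAt

theorem exists_level_set_parametrization [CompleteSpace E] [CompleteSpace F] (hU : IsOpen U)
    {h : E → F} (hh : DifferentiableOn ℂ h U) {a : E} (ha : a ∈ U) {h' : E →L[ℂ] F}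
    (hh' : HasFDerivAt h h' a) (hrange : h'.range = ⊤) (hker : h'.ker.ClosedComplemented) :
    ∃ ψ : h'.ker → E, ∃ V, IsOpen V ∧ 0 ∈ V ∧ DifferentiableOn ℂ ψ V ∧ InjOn ψ V ∧
      MapsTo ψ V (U ∩ h ⁻¹' {h a}) ∧ ψ 0 = a ∧ HasFDerivAt ψ h'.ker.subtypeL 0 := by
  have hcont : ContDiffAt ℂ 1 h a :=
    (contDiffOn_one_of_differentiableOn hU hh).contDiffAt (hU.mem_nhds ha)
  have hstrict := hcont.hasStrictFDerivAt' hh' one_ne_zero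
  set φ := hstrict.implicitFunctionDataOfComplemented h _ hrange hker with hφ
  set ψ := φ.implicitFunction (h a)
  have hψ : HasFDerivAt ψ h'.ker.subtypeL 0 :=
    (hstrict.to_implicitFunctionOfComplemented hrange hker).hasFDerivAt
  have hψ₀ : ψ 0 = a := hstrict.implicitFunctionOfComplemented_apply_image hrange hker
  have hψU : ∀ᶠ y in 𝓝 0, ψ y ∈ U :=
    hψ.continuousAt.eventually_mem (hψ₀.symm ▸ hU.mem_nhds ha)
  have hslice : ContinuousAt (fun y : h'.ker ↦ (h a, y)) 0 := by fun_prop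
  have hpt : φ.prodFun φ.pt = (h a, 0) := by simp [hφ]
  have hφψ : ∀ᶠ y in 𝓝 0, φ.prodFun (ψ y) = (h a, y) := by
    have := φ.prodFun_implicitFunction
    rw [hpt] at this
    exact hslice.eventually this
  have hψdiff : ∀ᶠ y in 𝓝 0, DifferentiableAt ℂ ψ y := by
    have hφcont : ContDiffAt ℂ 1 φ.implicitFunction.uncurry (h a, 0) := by
      rw [← hpt]
      refine φ.contDiffAt_implicitFunction hcont ?_ one_ne_zero
      simp only [hφ, HasStrictFDerivAt.implicitFunctionDataOfComplemented]
      fun_prop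
    filter_upwards [hslice.eventually (hφcont.eventually (by simp))] with y hy
    exact (hy.differentiableAt one_ne_zero).comp y (f := fun y : h'.ker ↦ (h a, y)) (by fun_prop)
  obtain ⟨V, hV, hVopen, hV₀⟩ := _root_.eventually_nhds_iff.1 (hψdiff.and (hψU.and hφψ))
  refine ⟨ψ, V, hVopen, hV₀, fun y hy ↦ (hV y hy).1.differentiableWithinAt,
    fun y hy y' hy' hyy' ↦ ?_, fun y hy ↦ ⟨(hV y hy).2.1, congrArg Prod.fst (hV y hy).2.2⟩, hψ₀, hψ⟩
  exact congrArg Prod.snd ((hV y hy).2.2.symm.trans (hyy' ▸ (hV y' hy').2.2))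

/-- Restrict `f` to the level set of `ℓ ∘ f` through `a`, which it maps into a translate of
`ker ℓ`. -/
theorem exists_slice_to_ker [CompleteSpace E] [CompleteSpace F] (hU : IsOpen U) {f : E → F}
    (hf : DifferentiableOn ℂ f U) (hinj : InjOn f U) {a : E} (ha : a ∈ U) {ℓ : F →L[ℂ] ℂ}
    (hℓ : ℓ ∘L fderiv ℂ f a ≠ 0) :
    ∃ φ : (ℓ ∘L fderiv ℂ f a).ker → ℓ.ker, ∃ V, IsOpen V ∧ 0 ∈ V ∧ DifferentiableOn ℂ φ V ∧
      InjOn φ V ∧ ∀ w, (fderiv ℂ φ 0 w : F) = fderiv ℂ f a w := by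
  have hfa : HasFDerivAt f (fderiv ℂ f a) a := (hf.differentiableAt (hU.mem_nhds ha)).hasFDerivAt
  obtain ⟨ψ, V, hV, hV₀, hψ, hψinj, hψV, hψ₀, hψ'⟩ := exists_level_set_parametrization hU
    (ℓ.differentiable.comp_differentiableOn hf) ha (ℓ.hasFDerivAt.comp a hfa)
    (Module.Dual.range_eq_top_of_ne_zero (by exact_mod_cast hℓ))
    (ContinuousLinearMap.ker_closedComplemented_of_finiteDimensional_range _)
  obtain ⟨P, hP⟩ := ℓ.ker_closedComplemented_of_finiteDimensional_range
  refine ⟨fun y ↦ P (f (ψ y)), V, hV, hV₀, ?_, fun y hy y' hy' hyy' ↦ ?_, fun w ↦ ?_⟩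
  · exact P.differentiable.comp_differentiableOn (hf.comp hψ fun y hy ↦ (hψV hy).1)
  · have hmem : f (ψ y) - f (ψ y') ∈ ℓ.ker := by
      rw [LinearMap.mem_ker, map_sub, sub_eq_zero]
      exact (hψV hy).2.trans (hψV hy').2.symm
    have hPmem := hP ⟨_, hmem⟩
    rw [map_sub, sub_eq_zero.2 hyy'] at hPmem
    exact hψinj hy hy' (hinj (hψV hy).1 (hψV hy').1
      (sub_eq_zero.1 (congrArg Subtype.val hPmem).symm))
  · have hder : HasFDerivAt (fun y ↦ P (f (ψ y))) (P ∘L fderiv ℂ f a ∘L Submodule.subtypeL _) 0 :=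
      P.hasFDerivAt.comp 0 (HasFDerivAt.comp 0 (hψ₀.symm ▸ hfa) hψ')
    rw [hder.fderiv]
    exact congrArg Subtype.val (hP ⟨fderiv ℂ f a w, w.2⟩)

theorem injective_fderiv_of_finrank_eq_one (hE : finrank ℂ E = 1) (hF : finrank ℂ F = 1)
    (hU : IsOpen U) {f : E → F} (hf : DifferentiableOn ℂ f U) (hinj : InjOn f U) {a : E}
    (ha : a ∈ U) : Function.Injective (fderiv ℂ f a) := by
  have : FiniteDimensional ℂ E := .of_finrank_eq_succ hE
  have : FiniteDimensional ℂ F := .of_finrank_eq_succ hF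
  let e : ℂ ≃L[ℂ] E := .ofFinrankEq (by rw [hE, finrank_self])
  let e' : F ≃L[ℂ] ℂ := .ofFinrankEq (by rw [hF, finrank_self])
  have hfa : HasFDerivAt f (fderiv ℂ f a) (e (e.symm a)) := by
    simpa using (hf.differentiableAt (hU.mem_nhds ha)).hasFDerivAt
  have hne : deriv (e' ∘ f ∘ e) (e.symm a) ≠ 0 :=
    deriv_ne_zero_of_injOn (hU.preimage e.continuous)
      (e'.differentiable.comp_differentiableOn
        (hf.comp e.differentiable.differentiableOn (mapsTo_preimage e U)))
      (e'.injective.comp_injOn (hinj.comp e.injective.injOn (mapsTo_preimage e U)))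
      (by simpa using ha)
  rw [(e'.hasFDerivAt.comp _ (hfa.comp _ e.hasFDerivAt)).hasDerivAt.deriv] at hne
  have : IsSimpleModule ℂ E := isSimpleModule_iff_finrank_eq_one.2 hE
  exact (LinearMap.injective_or_eq_zero (fderiv ℂ f a : E →ₗ[ℂ] F)).resolve_right fun h ↦
    hne (by simpa using congrArg e' (LinearMap.congr_fun h (e 1)))

/-- **Osgood's theorem**. -/
theorem injective_fderiv_of_injOn [FiniteDimensional ℂ E] [FiniteDimensional ℂ F]
    (hEF : finrank ℂ E = finrank ℂ F) (hU : IsOpen U) {f : E → F} (hf : DifferentiableOn ℂ f U)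
    (hinj : InjOn f U) {a : E} (ha : a ∈ U) : Function.Injective (fderiv ℂ f a) := by
  induction hn : finrank ℂ E generalizing E F with
  | zero =>
    have := finrank_zero_iff.1 hn
    exact Function.injective_of_subsingleton _
  | succ n ih =>
    have hzero_or : ∀ z ∈ U, fderiv ℂ f z = 0 ∨ Function.Injective (fderiv ℂ f z) := by
      refine fun z hz ↦ or_iff_not_imp_left.2 fun hne ↦ ?_
      obtain ⟨x, hx⟩ := DFunLike.ne_iff.1 hne
      obtain ⟨ℓ, hℓ⟩ := SeparatingDual.exists_ne_zero (R := ℂ) hx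
      have hℓf : ℓ ∘L fderiv ℂ f z ≠ 0 := DFunLike.ne_iff.2 ⟨x, hℓ⟩
      have hkerE := Module.Dual.finrank_ker_add_one_of_ne_zero
        (f := (ℓ ∘L fderiv ℂ f z : E →L[ℂ] ℂ).toLinearMap) (by exact_mod_cast hℓf)
      have hkerF := Module.Dual.finrank_ker_add_one_of_ne_zero (f := ℓ.toLinearMap)
        fun h ↦ hℓ (LinearMap.congr_fun h _)
      have := FiniteDimensional.complete ℂ E
      have := FiniteDimensional.complete ℂ F
      obtain ⟨φ, V, hV, hV₀, hφ, hφinj, hφf⟩ := exists_slice_to_ker hU hf hinj hz hℓf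
      have hφ' : Function.Injective (fderiv ℂ φ 0) :=
        ih (by omega) hV hφ hφinj hV₀ (by omega)
      refine (injective_iff_map_eq_zero _).2 fun w hw ↦ ?_
      have hwker : w ∈ (ℓ ∘L fderiv ℂ f z).ker := by simp [hw]
      exact congrArg Subtype.val ((injective_iff_map_eq_zero _).1 hφ' ⟨w, hwker⟩
        (Subtype.ext ((hφf _).trans hw)))
    obtain rfl | hpos := n.eq_zero_or_pos
    · exact injective_fderiv_of_finrank_eq_one hn (hEF.symm.trans hn) hU hf hinj ha
    · exact injective_fderiv_of_forall_eq_zero_or_injective hEF (by omega) hU hf hinj hzero_or ha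

end Osgood

section Kobayashi

variable {E : Type*} [NormedAddCommGroup E] [NormedSpace ℂ E] {Ω : Set E} {p : E}

theorem kobayashi_nonneg (Ω : Set E) (p ζ : E) : 0 ≤ kobayashi Ω p ζ :=
  Real.sInf_nonneg fun _ h ↦ h.1.le

theorem exists_pos_holomorphic_disc (hΩ : IsOpen Ω) (hp : p ∈ Ω) (ζ : E) :
    ∃ α : ℝ, 0 < α ∧ ∃ φ : ℂ → E, DifferentiableOn ℂ φ (ball 0 1) ∧
      (∀ τ ∈ ball (0 : ℂ) 1, φ τ ∈ Ω) ∧ φ 0 = p ∧ α • deriv φ 0 = ζ := by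
  obtain ⟨ε, hε, hball⟩ := Metric.isOpen_iff.1 hΩ p hp
  obtain ⟨t, ht, hζt⟩ : ∃ t > 0, t * ‖ζ‖ < ε := by
    simpa [mul_comm] using exists_pos_mul_lt hε ‖ζ‖
  have hder (τ : ℂ) : HasDerivAt (fun τ : ℂ ↦ p + τ • t • ζ) (t • ζ) τ := by
    simpa using! ((hasDerivAt_id τ).smul_const (t • ζ)).const_add p
  refine ⟨t⁻¹, inv_pos.2 ht, fun τ ↦ p + τ • t • ζ,
    fun τ _ ↦ (hder τ).differentiableAt.differentiableWithinAt, fun τ hτ ↦ hball ?_, by simp, ?_⟩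
  · rw [mem_ball_zero_iff] at hτ
    rw [mem_ball_iff_norm, add_sub_cancel_left, norm_smul, norm_smul, Real.norm_of_nonneg ht.le]
    exact (mul_le_of_le_one_left (by positivity) hτ.le).trans_lt hζt
  · rw [(hder 0).deriv, inv_smul_smul₀ ht.ne']

theorem kobayashi_le_of_holomorphic_disc {α : ℝ} (hα : 0 < α) {φ : ℂ → E}
    (hφ : DifferentiableOn ℂ φ (ball 0 1)) (hφΩ : ∀ τ ∈ ball (0 : ℂ) 1, φ τ ∈ Ω) :
    kobayashi Ω (φ 0) (α • deriv φ 0) ≤ α :=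
  csInf_le ⟨0, fun _ h ↦ h.1.le⟩ ⟨hα, φ, hφ, hφΩ, rfl, rfl⟩

theorem norm_fderiv_le_kobayashi {F : Type*} [NormedAddCommGroup F] [NormedSpace ℂ F]
    (hΩ : IsOpen Ω) {f : E → F} (hf : DifferentiableOn ℂ f Ω) (hp : p ∈ Ω)
    (hmaps : MapsTo f Ω (ball (f p) 1)) (ζ : E) : ‖fderiv ℂ f p ζ‖ ≤ kobayashi Ω p ζ := by
  refine le_csInf (exists_pos_holomorphic_disc hΩ hp ζ) ?_
  rintro α ⟨hα, φ, hφ, hφΩ, rfl, rfl⟩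
  have h0 : (0 : ℂ) ∈ ball (0 : ℂ) 1 := mem_ball_self one_pos
  have hφ0 : DifferentiableAt ℂ φ 0 := hφ.differentiableAt (isOpen_ball.mem_nhds h0)
  have hfφ0 : DifferentiableAt ℂ f (φ 0) := hf.differentiableAt (hΩ.mem_nhds hp)
  have hschwarz : ‖deriv (f ∘ φ) 0‖ ≤ 1 :=
    Complex.norm_deriv_le_one_of_mapsTo_ball (hf.comp hφ hφΩ)
      (fun τ hτ ↦ ball_subset_closedBall (hmaps (hφΩ τ hτ))) one_pos
  rw [fderiv_comp_deriv 0 hfφ0 hφ0] at hschwarz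
  rw [ContinuousLinearMap.map_smul_of_tower, norm_smul, Real.norm_of_nonneg hα.le]
  exact mul_le_of_le_one_right hα.le hschwarz

theorem kobayashi_fderiv_le_norm_div {F : Type*} [NormedAddCommGroup F] [NormedSpace ℂ F]
    {g : F → E} {y : F} {r : ℝ} (hr : 0 < r) (hg : DifferentiableOn ℂ g (ball y r))
    (hgΩ : MapsTo g (ball y r) Ω) (v : F) : kobayashi Ω (g y) (fderiv ℂ g y v) ≤ ‖v‖ / r := by
  refine le_of_forall_gt_imp_ge_of_dense fun α hα ↦ ?_
  have hα₀ : 0 < α := (by positivity : 0 ≤ ‖v‖ / r).trans_lt hα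
  have hline (τ : ℂ) : HasDerivAt (fun τ : ℂ ↦ y + τ • α⁻¹ • v) (α⁻¹ • v) τ := by
    simpa using! ((hasDerivAt_id τ).smul_const (α⁻¹ • v)).const_add y
  have hball : MapsTo (fun τ : ℂ ↦ y + τ • α⁻¹ • v) (ball 0 1) (ball y r) := by
    intro τ hτ
    have hv : ‖α⁻¹ • v‖ < r := by
      rw [norm_smul, norm_inv, Real.norm_of_nonneg hα₀.le, inv_mul_lt_iff₀ hα₀]
      exact (div_lt_iff₀ hr).1 hα
    rw [mem_ball_zero_iff] at hτ
    rw [mem_ball_iff_norm, add_sub_cancel_left, norm_smul]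
    exact (mul_le_of_le_one_left (norm_nonneg _) hτ.le).trans_lt hv
  have hle := kobayashi_le_of_holomorphic_disc hα₀
    (hg.comp (fun τ _ ↦ (hline τ).differentiableAt.differentiableWithinAt) hball)
    fun τ hτ ↦ hgΩ (hball hτ)
  have hgy : HasFDerivAt g (fderiv ℂ g y) (y + (0 : ℂ) • α⁻¹ • v) := by
    simpa using (hg.differentiableAt (ball_mem_nhds y hr)).hasFDerivAt
  rw [(hgy.comp_hasDerivAt 0 (hline 0)).deriv, ContinuousLinearMap.map_smul_of_tower,
    smul_inv_smul₀ hα₀.ne'] at hle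
  simpa using hle

theorem exists_hasFDerivAt_invFunOn [FiniteDimensional ℂ E] {F : Type*} [NormedAddCommGroup F]
    [NormedSpace ℂ F] [FiniteDimensional ℂ F] (hEF : finrank ℂ E = finrank ℂ F)
    (hΩ : IsOpen Ω) {f : E → F} (hf : DifferentiableOn ℂ f Ω) (hinj : InjOn f Ω) (hp : p ∈ Ω) :
    ∃ T : E ≃L[ℂ] F, fderiv ℂ f p = T ∧
      HasFDerivAt (Function.invFunOn f Ω) (T.symm : F →L[ℂ] E) (f p) := by
  let T : E ≃L[ℂ] F := (LinearEquiv.ofInjectiveOfFinrankEq (fderiv ℂ f p : E →ₗ[ℂ] F)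
    (injective_fderiv_of_injOn hEF hΩ hf hinj hp) hEF).toContinuousLinearEquiv
  have hT : fderiv ℂ f p = T := rfl
  have hstrict : HasStrictFDerivAt f (T : E →L[ℂ] F) p := hT ▸
    ((contDiffOn_one_of_differentiableOn hΩ hf).contDiffAt (hΩ.mem_nhds hp)).hasStrictFDerivAt
      one_ne_zero
  exact ⟨T, hT, (hstrict.to_local_left_inverse
    (mem_of_superset (hΩ.mem_nhds hp) hinj.leftInvOn_invFunOn)).hasFDerivAt⟩

theorem kobayashi_le_norm_fderiv_div [FiniteDimensional ℂ E] {F : Type*} [NormedAddCommGroup F]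
    [NormedSpace ℂ F] [FiniteDimensional ℂ F] (hEF : finrank ℂ E = finrank ℂ F)
    (hΩ : IsOpen Ω) {f : E → F} (hf : DifferentiableOn ℂ f Ω) (hinj : InjOn f Ω) (hp : p ∈ Ω)
    {r : ℝ} (hr : 0 < r) (hball : ball (f p) r ⊆ f '' Ω) (ζ : E) :
    kobayashi Ω p ζ ≤ ‖fderiv ℂ f p ζ‖ / r := by
  have hinv : DifferentiableOn ℂ (Function.invFunOn f Ω) (f '' Ω) := by
    rintro _ ⟨x, hx, rfl⟩
    obtain ⟨T, -, hT⟩ := exists_hasFDerivAt_invFunOn hEF hΩ hf hinj hx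
    exact hT.differentiableAt.differentiableWithinAt
  obtain ⟨T, hfT, hT⟩ := exists_hasFDerivAt_invFunOn hEF hΩ hf hinj hp
  simpa [hT.fderiv, hfT, hinj.leftInvOn_invFunOn hp] using
    kobayashi_fderiv_le_norm_div hr (hinv.mono hball) (fun y hy ↦ Function.invFunOn_mem (hball hy))
      (fderiv ℂ f p ζ)

theorem squeezing_mul_kobayashi_le [FiniteDimensional ℂ E] (hΩ : IsOpen Ω) (hp : p ∈ Ω)
    (x y : ℂ) (ζ₁ ζ₂ : E) : squeezing Ω p * kobayashi Ω p (x • ζ₁ + y • ζ₂) ≤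
      ‖x‖ * kobayashi Ω p ζ₁ + ‖y‖ * kobayashi Ω p ζ₂ := by
  have hnonneg := kobayashi_nonneg Ω p
  have hrhs : 0 ≤ ‖x‖ * kobayashi Ω p ζ₁ + ‖y‖ * kobayashi Ω p ζ₂ :=
    add_nonneg (mul_nonneg (norm_nonneg _) (hnonneg _)) (mul_nonneg (norm_nonneg _) (hnonneg _))
  obtain hzero | hpos := (hnonneg (x • ζ₁ + y • ζ₂)).eq_or_lt
  · rwa [← hzero, mul_zero]
  rw [← le_div_iff₀ hpos]
  refine Real.sSup_le ?_ (by positivity)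
  rintro r ⟨hr, f, hf, hinj, hfp, hsub, hball⟩
  have hcontr (ζ : E) : ‖fderiv ℂ f p ζ‖ ≤ kobayashi Ω p ζ :=
    norm_fderiv_le_kobayashi hΩ hf hp (by rwa [hfp, mapsTo_iff_image_subset]) ζ
  rw [le_div_iff₀ hpos]
  calc r * kobayashi Ω p (x • ζ₁ + y • ζ₂) ≤ ‖fderiv ℂ f p (x • ζ₁ + y • ζ₂)‖ := by
        rw [← le_div_iff₀' hr]
        exact kobayashi_le_norm_fderiv_div rfl hΩ hf hinj hp hr (by rwa [hfp]) _
    _ ≤ ‖x‖ * ‖fderiv ℂ f p ζ₁‖ + ‖y‖ * ‖fderiv ℂ f p ζ₂‖ := by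
        rw [map_add, map_smul, map_smul, ← norm_smul, ← norm_smul]
        exact norm_add_le _ _
    _ ≤ ‖x‖ * kobayashi Ω p ζ₁ + ‖y‖ * kobayashi Ω p ζ₂ := by gcongr <;> exact hcontr _

theorem squeezing_le_mul_rpow_sub [FiniteDimensional ℂ E] (hΩ : IsOpen Ω) (hp : p ∈ Ω)
    {x y : ℂ} {ζ₁ ζ₂ : E} {C₁ C₂ a b δ : ℝ} (hC₂ : 0 < C₂) (hδ : 0 < δ)
    (hK₁ : kobayashi Ω p ζ₁ ≤ C₁ * δ ^ a) (hK₂ : kobayashi Ω p ζ₂ ≤ C₁ * δ ^ a)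
    (hK₃ : C₂ * δ ^ b ≤ kobayashi Ω p (x • ζ₁ + y • ζ₂)) :
    squeezing Ω p ≤ (‖x‖ + ‖y‖) * C₁ / C₂ * δ ^ (a - b) := by
  have hs : 0 ≤ squeezing Ω p := Real.sSup_nonneg fun _ h ↦ h.1.le
  have hle : squeezing Ω p * (C₂ * δ ^ b) ≤ (‖x‖ + ‖y‖) * (C₁ * δ ^ a) :=
    calc squeezing Ω p * (C₂ * δ ^ b)
        ≤ squeezing Ω p * kobayashi Ω p (x • ζ₁ + y • ζ₂) := by gcongr
      _ ≤ ‖x‖ * kobayashi Ω p ζ₁ + ‖y‖ * kobayashi Ω p ζ₂ :=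
        squeezing_mul_kobayashi_le hΩ hp x y ζ₁ ζ₂
      _ ≤ ‖x‖ * (C₁ * δ ^ a) + ‖y‖ * (C₁ * δ ^ a) := by gcongr
      _ = (‖x‖ + ‖y‖) * (C₁ * δ ^ a) := by ring
  rw [← le_div_iff₀ (by positivity)] at hle
  refine hle.trans_eq ?_
  rw [Real.rpow_sub hδ, div_mul_div_comm, mul_assoc]

end Kobayashi

theorem exists_mem_Ioo_mul_rpow_lt (C : ℝ) {e δ₀ c : ℝ} (he : 0 < e) (hδ₀ : 0 < δ₀) (hc : 0 < c) :
    ∃ δ ∈ Ioo 0 δ₀, C * δ ^ e < c := by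
  have hlim : Tendsto (fun δ : ℝ ↦ C * δ ^ e) (𝓝[>] 0) (𝓝 0) := by
    have := (Real.continuousAt_rpow_const 0 e (.inr he.le)).tendsto.const_mul C
    rw [Real.zero_rpow he.ne', mul_zero] at this
    exact this.mono_left nhdsWithin_le_nhds
  obtain ⟨δ, hδc, hδ⟩ := ((hlim.eventually_lt_const hc).and (Ioo_mem_nhdsGT hδ₀)).exists
  exact ⟨δ, hδ, hδc⟩

theorem no_uniform_lower_bound_general {E : Type*} [NormedAddCommGroup E] [NormedSpace ℂ E]
    [FiniteDimensional ℂ E] {Ω : Set E} (hΩ : IsOpen Ω) {ζ₁ ζ₂ : E} {x y : ℂ}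
    {C₁ C₂ a b δ₀ : ℝ} (hC₂ : 0 < C₂) (hab : b < a) (hδ₀ : 0 < δ₀) {p : ℝ → E}
    (hpΩ : ∀ δ ∈ Ioo 0 δ₀, p δ ∈ Ω)
    (hK₁ : ∀ δ ∈ Ioo 0 δ₀, kobayashi Ω (p δ) ζ₁ ≤ C₁ * δ ^ a)
    (hK₂ : ∀ δ ∈ Ioo 0 δ₀, kobayashi Ω (p δ) ζ₂ ≤ C₁ * δ ^ a)
    (hK₃ : ∀ δ ∈ Ioo 0 δ₀, C₂ * δ ^ b ≤ kobayashi Ω (p δ) (x • ζ₁ + y • ζ₂)) :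
    (∃ C₃ : ℝ, 0 < C₃ ∧ ∀ δ ∈ Ioo 0 δ₀, squeezing Ω (p δ) ≤ C₃ * δ ^ (a - b)) ∧
      ∀ c : ℝ, 0 < c → ∃ δ ∈ Ioo 0 δ₀, squeezing Ω (p δ) < c := by
  have hbound : ∀ δ ∈ Ioo 0 δ₀,
      squeezing Ω (p δ) ≤ (‖x‖ + ‖y‖) * C₁ / C₂ * δ ^ (a - b) := fun δ hδ ↦
    squeezing_le_mul_rpow_sub hΩ (hpΩ δ hδ) hC₂ hδ.1 (hK₁ δ hδ) (hK₂ δ hδ) (hK₃ δ hδ)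
  refine ⟨⟨max 1 ((‖x‖ + ‖y‖) * C₁ / C₂), by positivity, fun δ hδ ↦ (hbound δ hδ).trans ?_⟩,
    fun c hc ↦ ?_⟩
  · have := hδ.1
    gcongr
    exact le_max_right _ _
  · obtain ⟨δ, hδ, hδc⟩ := exists_mem_Ioo_mul_rpow_lt _ (sub_pos.2 hab) hδ₀ hc
    exact ⟨δ, hδ, (hbound δ hδ).trans_lt hδc⟩

theorem no_uniform_lower_bound (k : ℕ) (hk : 1 ≤ k)
    (Ω : Set (EuclideanSpace ℂ (Fin 3))) (hopen : IsOpen Ω)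
    (hbdd : Bornology.IsBounded Ω) (q : EuclideanSpace ℂ (Fin 3))
    (ζ₁ ζ₂ : EuclideanSpace ℂ (Fin 3)) (hu₁ : ‖ζ₁‖ = 1) (hu₂ : ‖ζ₂‖ = 1)
    (hind : LinearIndependent ℂ ![ζ₁, ζ₂])
    (C₁ C₂ : ℝ) (hC₁ : 0 < C₁) (hC₂ : 0 < C₂)
    (δ₀ : ℝ) (hδ₀ : 0 < δ₀) (p : ℝ → EuclideanSpace ℂ (Fin 3))
    (hpΩ : ∀ δ ∈ Set.Ioo (0 : ℝ) δ₀, p δ ∈ Ω)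
    (hpq : ∀ δ ∈ Set.Ioo (0 : ℝ) δ₀, ‖p δ - q‖ ≤ δ)
    (hK₁ : ∀ δ ∈ Set.Ioo (0 : ℝ) δ₀,
        kobayashi Ω (p δ) ζ₁ ≤ C₁ * δ ^ (-(1 : ℝ) / (4 * k + 1)))
    (hK₂ : ∀ δ ∈ Set.Ioo (0 : ℝ) δ₀,
        kobayashi Ω (p δ) ζ₂ ≤ C₁ * δ ^ (-(1 : ℝ) / (4 * k + 1)))
    (hK₃ : ∀ δ ∈ Set.Ioo (0 : ℝ) δ₀,
        C₂ * δ ^ (-(1 : ℝ) / (4 * k)) ≤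
          kobayashi Ω (p δ) (((Real.sqrt 2)⁻¹ : ℂ) • (ζ₁ + ζ₂))) :
    (∃ C₃ : ℝ, 0 < C₃ ∧ ∀ δ ∈ Set.Ioo (0 : ℝ) δ₀,
        squeezing Ω (p δ) ≤ C₃ * δ ^ ((1 : ℝ) / (4 * k * (4 * k + 1)))) ∧
    ∀ c : ℝ, 0 < c → ∃ δ ∈ Set.Ioo (0 : ℝ) δ₀, squeezing Ω (p δ) < c := by
  have : (0 : ℝ) < k := by exact_mod_cast hk
  have hexp : (1 : ℝ) / (4 * k * (4 * k + 1)) = -1 / (4 * k + 1) - -1 / (4 * k) := by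
    field_simp
    ring
  have hrate : (-1 : ℝ) / (4 * k) < -1 / (4 * k + 1) := by
    rw [← sub_pos, ← hexp]
    positivity
  simp only [smul_add] at hK₃
  rw [hexp]
  exact no_uniform_lower_bound_general hopen hC₂ hrate hδ₀ hpΩ hK₁ hK₂ hK₃
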